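/- With Apéry's sequences B_n, A_n for ζ(2), one has ∑_{n=0}^∞ |B_n·ζ(2) − A_n| = ∑_{n=0}^∞ ∑_{k=0}^∞ C(n+k,n) / ( (2n+k+1)² · C(2n+k,n)² ). -/

import Mathlib

open Finset Real

/-- Apéry's denominators for `ζ(2)`: `Bₙ = ∑_{k=0}^n C(n,k)² C(n+k,k)`. -/
noncomputable def aperyB2 (n : ℕ) : ℝ :=
  ∑ k ∈ range (n + 1), (Nat.choose n k : ℝ) ^ 2 * (Nat.choose (n + k) k : ℝ)

/-- Apéry's numerators for `ζ(2)`: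
`Aₙ = ∑_{k=0}^n C(n,k)² C(n+k,k) (2 ∑_{m=1}^n (−1)^{m−1}/m²
  + ∑_{m=1}^k (−1)^{n+m−1}/(m² C(n,m) C(n+m,m)))`. -/
noncomputable def aperyA2 (n : ℕ) : ℝ :=
  ∑ k ∈ range (n + 1), (Nat.choose n k : ℝ) ^ 2 * (Nat.choose (n + k) k : ℝ) *
    (2 * (∑ m ∈ Icc 1 n, (-1 : ℝ) ^ (m - 1) / (m : ℝ) ^ 2)
      + ∑ m ∈ Icc 1 k,
          (-1 : ℝ) ^ (n + m - 1) /
            ((m : ℝ) ^ 2 * (Nat.choose n m : ℝ) * (Nat.choose (n + m) m : ℝ)))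

open Filter Topology

/-!
Write `bₙ(k) = C(n,k)² C(n+k,k)`, let `cₙ(k)` be Apéry's approximations to `ζ(2)`, so that
`Bₙ = ∑ₖ bₙ(k)` and `Aₙ = ∑ₖ bₙ(k) cₙ(k)`, and put `rₙ(t) = C(t,n) / ((t+n+1) C(t+n,n))²`.
With `t = n + k`, the inner sum of the double series is `∑ₜ rₙ(t)`.

All three sequences `Aₙ`, `Bₙ` and `(-1)ⁿ ∑ₜ rₙ(t)` satisfy Apéry's recurrence
`(n+2)² uₙ₊₂ = (11(n+1)² + 11(n+1) + 3) uₙ₊₁ + (n+1)² uₙ`, by creative telescoping. In terms of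
Gamma functions `(-1)ⁿ rₙ(t)` is `bₙ(-t-1)` up to a factor of period `1` in `t`, so one
certificate serves for `Bₙ` and for the series; for `Aₙ` the increments of `cₙ(k)` in `n` and `k`
contribute a correction that telescopes as well. Comparing the initial values at `n = 0, 1` gives
`Bₙ ζ(2) - Aₙ = (-1)ⁿ ∑ₜ rₙ(t)`, and `rₙ ≥ 0`.
-/

section Choose

variable {K : Type*} [Field K] [CharZero K]

lemma cast_choose_succ_succ (n k : ℕ) :
    ((n + 1).choose (k + 1) : K) = n.choose k * (n + 1) / (k + 1) := by
  rw [eq_div_iff (Nat.cast_add_one_ne_zero k), mul_comm (n.choose k : K)]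
  exact_mod_cast (Nat.add_one_mul_choose_eq n k).symm

lemma cast_choose_eq_succ_left (n k : ℕ) :
    (n.choose k : K) = (n + 1).choose k * (n + 1 - k) / (n + 1) := by
  rw [eq_div_iff (Nat.cast_add_one_ne_zero n)]
  rcases le_or_gt k (n + 1) with hk | hk
  · have h := congrArg (Nat.cast : ℕ → K) (Nat.choose_mul_succ_eq n k)
    push_cast [Nat.cast_sub hk] at h
    exact h
  · simp [Nat.choose_eq_zero_of_lt hk, Nat.choose_eq_zero_of_lt (Nat.lt_of_succ_lt hk)]

lemma cast_choose_succ_right (n k : ℕ) :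
    (n.choose (k + 1) : K) = n.choose k * (n - k) / (k + 1) := by
  rw [cast_choose_eq_succ_left n (k + 1), cast_choose_succ_succ]
  have hn : (n : K) + 1 ≠ 0 := Nat.cast_add_one_ne_zero n
  push_cast
  field_simp
  ring

lemma cast_add_succ_choose (m n : ℕ) :
    ((m + n + 1).choose n : K) = (m + n).choose n * (m + n + 1) / (m + 1) := by
  have hm : (m : K) + 1 ≠ 0 := Nat.cast_add_one_ne_zero m
  have hmn : (m : K) + n + 1 ≠ 0 := by exact_mod_cast Nat.succ_ne_zero (m + n)
  rw [cast_choose_eq_succ_left (m + n) n]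
  push_cast
  field_simp
  ring

end Choose

/-- Apéry's recurrence operator for `ζ(2)`; the sequences in its kernel are the solutions of
`(n+2)² uₙ₊₂ = (11(n+1)² + 11(n+1) + 3) uₙ₊₁ + (n+1)² uₙ`. -/
def aperyOp (u : ℕ → ℝ) (n : ℕ) : ℝ :=
  ((n : ℝ) + 2) ^ 2 * u (n + 2) - (11 * ((n : ℝ) + 1) ^ 2 + 11 * (n + 1) + 3) * u (n + 1)
    - ((n : ℝ) + 1) ^ 2 * u n

lemma aperyOp_sub (u v : ℕ → ℝ) (n : ℕ) :
    aperyOp (fun m => u m - v m) n = aperyOp u n - aperyOp v n := by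
  unfold aperyOp
  ring

lemma aperyOp_mul_const (u : ℕ → ℝ) (a : ℝ) (n : ℕ) :
    aperyOp (fun m => u m * a) n = aperyOp u n * a := by
  unfold aperyOp
  ring

lemma aperyOp_sum {ι : Type*} (s : Finset ι) (f : ℕ → ι → ℝ) (n : ℕ) :
    aperyOp (fun m => ∑ i ∈ s, f m i) n = ∑ i ∈ s, aperyOp (fun m => f m i) n := by
  simp only [aperyOp, sum_sub_distrib, mul_sum]

lemma hasSum_aperyOp {ι : Type*} {f : ℕ → ι → ℝ} {u : ℕ → ℝ} (hf : ∀ m, HasSum (f m) (u m))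
    (n : ℕ) : HasSum (fun i => aperyOp (fun m => f m i) n) (aperyOp u n) :=
  (((hf (n + 2)).mul_left _).sub ((hf (n + 1)).mul_left _)).sub ((hf n).mul_left _)

lemma eq_of_aperyOp_eq {u v : ℕ → ℝ} (h : ∀ n, aperyOp u n = aperyOp v n) (h0 : u 0 = v 0)
    (h1 : u 1 = v 1) (n : ℕ) : u n = v n := by
  induction n using Nat.twoStepInduction with
  | zero => exact h0
  | one => exact h1
  | more n ih0 ih1 =>
    have hn := h n
    rw [aperyOp, aperyOp, ih0, ih1, sub_left_inj, sub_left_inj] at hn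
    exact mul_left_cancel₀ (by positivity) hn

lemma sum_range_succ_eq_of_telescoping {M : Type*} [AddCommGroup M] {F G : ℕ → M} {N : ℕ}
    (h0 : F 0 = G 0) (h : ∀ k < N, F (k + 1) = G (k + 1) - G k) :
    ∑ k ∈ range (N + 1), F k = G N := by
  rw [sum_range_succ', h0, sum_congr rfl fun k hk => h k (mem_range.mp hk), sum_range_sub,
    sub_add_cancel]

lemma eq_sub_of_hasSum_telescoping {M : Type*} [AddCommGroup M] [TopologicalSpace M]
    [IsTopologicalAddGroup M] [T2Space M] {G : ℕ → M} {s l : M}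
    (hG : Tendsto G atTop (𝓝 l)) (hs : HasSum (fun k => G (k + 1) - G k) s) : s = l - G 0 := by
  refine tendsto_nhds_unique hs.tendsto_sum_nat ?_
  simpa only [sum_range_sub] using hG.sub_const (G 0)

/-- The polynomial factor of the creative telescoping certificate, common to `aperyWeight`
(at `x = k`) and to `aperyRemainder` (at `x = -(t + 1)`). -/
def aperyCert (N x : ℝ) : ℝ :=
  x ^ 2 + 3 * (2 * N + 1) * x - 11 * N ^ 2 - 9 * N - 2

/-- The summand `C(n,k)² C(n+k,k)` of Apéry's denominators. -/
def aperyWeight (n k : ℕ) : ℝ :=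
  (n.choose k : ℝ) ^ 2 * ((n + k).choose k : ℝ)

/-- Apéry's approximations `cₙ(k)` to `ζ(2)`, whose averages with weights `aperyWeight n k` are
the quotients `Aₙ / Bₙ`. They are meaningful for `k ≤ n` only: further terms of the second sum
are divisions by zero. -/
noncomputable def aperyApprox (n k : ℕ) : ℝ :=
  2 * (∑ m ∈ Icc 1 n, (-1 : ℝ) ^ (m - 1) / (m : ℝ) ^ 2)
    + ∑ m ∈ Icc 1 k,
        (-1 : ℝ) ^ (n + m - 1) / ((m : ℝ) ^ 2 * (n.choose m : ℝ) * ((n + m).choose m : ℝ))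

lemma aperyWeight_eq_zero_of_lt {n k : ℕ} (h : n < k) : aperyWeight n k = 0 := by
  simp [aperyWeight, Nat.choose_eq_zero_of_lt h]

lemma sum_range_aperyWeight_mul {n N : ℕ} (h : n < N) (f : ℕ → ℝ) :
    ∑ k ∈ range N, aperyWeight n k * f k = ∑ k ∈ range (n + 1), aperyWeight n k * f k :=
  eventually_constant_sum
    (fun _ hk => by rw [aperyWeight_eq_zero_of_lt (Nat.lt_of_succ_le hk), zero_mul]) h

lemma aperyB2_eq_sum_range {n N : ℕ} (h : n < N) :
    aperyB2 n = ∑ k ∈ range N, aperyWeight n k := by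
  simpa only [mul_one] using! (sum_range_aperyWeight_mul h fun _ => 1).symm

lemma aperyA2_eq_sum_range {n N : ℕ} (h : n < N) :
    aperyA2 n = ∑ k ∈ range N, aperyWeight n k * aperyApprox n k :=
  (sum_range_aperyWeight_mul h (aperyApprox n)).symm

lemma aperyOp_aperyWeight_zero (n : ℕ) :
    aperyOp (fun m => aperyWeight m 0) n = aperyCert (n + 1) 0 * aperyWeight (n + 1) 0 := by
  simp only [aperyOp, aperyWeight, aperyCert, Nat.choose_zero_right, Nat.cast_one]
  ring

lemma aperyWeight_eq_succ_left (n k : ℕ) :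
    aperyWeight n k
      = aperyWeight (n + 1) k * (((n : ℝ) + 1 - k) ^ 2 / ((n + 1) * (n + k + 1))) := by
  unfold aperyWeight
  rw [show n + 1 + k = n + k + 1 by ring, cast_add_succ_choose, cast_choose_eq_succ_left n k]
  field_simp

lemma aperyWeight_succ_right (n k : ℕ) :
    aperyWeight n (k + 1)
      = aperyWeight n k * (((n : ℝ) - k) ^ 2 * (n + k + 1) / (k + 1) ^ 3) := by
  unfold aperyWeight
  rw [← add_assoc, cast_choose_succ_succ (n + k), cast_choose_succ_right]
  push_cast
  field_simp

lemma aperyWeight_succ_succ (n k : ℕ) :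
    aperyWeight (n + 1) (k + 1)
      = aperyWeight n k * (((n : ℝ) + 1) * (n + k + 1) * (n + k + 2) / (k + 1) ^ 3) := by
  unfold aperyWeight
  rw [show n + 1 + (k + 1) = n + k + 1 + 1 by ring, cast_choose_succ_succ (n + k + 1),
    cast_add_succ_choose, cast_choose_succ_succ n]
  push_cast
  field_simp
  ring

lemma aperyOp_aperyWeight_succ (n k : ℕ) :
    aperyOp (fun m => aperyWeight m (k + 1)) n
      = aperyCert (n + 1) (k + 1) * aperyWeight (n + 1) (k + 1)
        - aperyCert (n + 1) k * aperyWeight (n + 1) k := by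
  simp only [aperyOp, aperyCert]
  rw [aperyWeight_succ_succ (n + 1), aperyWeight_succ_right n, aperyWeight_eq_succ_left n,
    aperyWeight_succ_right (n + 1)]
  push_cast
  field_simp
  ring

theorem aperyOp_aperyB2 (n : ℕ) : aperyOp aperyB2 n = 0 := by
  calc aperyOp aperyB2 n
      = aperyOp (fun m => ∑ k ∈ range (n + 3), aperyWeight m k) n := by
        simp only [aperyOp]
        rw [aperyB2_eq_sum_range (N := n + 3), aperyB2_eq_sum_range (N := n + 3),
          aperyB2_eq_sum_range (N := n + 3)] <;> omega
    _ = ∑ k ∈ range (n + 2 + 1), aperyOp (fun m => aperyWeight m k) n := aperyOp_sum ..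
    _ = aperyCert (n + 1) (n + 2 : ℕ) * aperyWeight (n + 1) (n + 2) :=
        sum_range_succ_eq_of_telescoping
          (G := fun k : ℕ => aperyCert (n + 1) k * aperyWeight (n + 1) k)
          (by simpa using aperyOp_aperyWeight_zero n)
          fun k _ => by simpa using aperyOp_aperyWeight_succ n k
    _ = 0 := by rw [aperyWeight_eq_zero_of_lt (by omega), mul_zero]

lemma aperyApprox_succ_right (n k : ℕ) :
    aperyApprox n (k + 1) = aperyApprox n k
      + (-1) ^ (n + k) / (((k : ℝ) + 1) ^ 2 * n.choose (k + 1) * (n + k + 1).choose (k + 1)) := by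
  unfold aperyApprox
  rw [sum_Icc_succ_top (Nat.le_add_left 1 k), ← add_assoc, ← add_assoc n k 1, Nat.add_sub_cancel]
  push_cast
  rfl

lemma aperyApprox_succ_zero (n : ℕ) :
    aperyApprox (n + 1) 0 = aperyApprox n 0 + 2 * (-1) ^ n / ((n : ℝ) + 1) ^ 2 := by
  simp only [aperyApprox, sum_Icc_succ_top (Nat.le_add_left 1 n), zero_lt_one, Icc_eq_empty_of_lt,
    sum_empty, add_zero, Nat.add_sub_cancel]
  push_cast
  ring

lemma aperyApprox_succ_left {n k : ℕ} (h : k ≤ n) :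
    aperyApprox (n + 1) k = aperyApprox n k
      + 2 * (-1) ^ (n + k) / (((n : ℝ) + 1) * (n + k + 1) * n.choose k * (n + k).choose k) := by
  induction k with
  | zero => simpa [sq] using aperyApprox_succ_zero n
  | succ k ih =>
    have hnk : (n : ℝ) - k ≠ 0 := sub_ne_zero.mpr (by exact_mod_cast (Nat.lt_of_succ_le h).ne')
    have h₁ : (n.choose k : ℝ) ≠ 0 := by exact_mod_cast (Nat.choose_pos (by omega)).ne'
    have h₂ : ((n + k).choose k : ℝ) ≠ 0 := by exact_mod_cast (Nat.choose_pos (by omega)).ne'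
    rw [aperyApprox_succ_right, aperyApprox_succ_right, ih (by omega),
      show n + 1 + k + 1 = n + k + 1 + 1 by ring, cast_choose_succ_succ (n + k + 1),
      cast_add_succ_choose, ← add_assoc, cast_choose_succ_succ (n + k),
      cast_choose_succ_succ n, cast_choose_succ_right n]
    push_cast
    field_simp
    ring

lemma aperyWeight_mul_aperyApprox_succ_left (n k : ℕ) :
    aperyWeight n k * aperyApprox (n + 1) k = aperyWeight n k * aperyApprox n k
      + 2 * (-1) ^ (n + k) * n.choose k / (((n : ℝ) + 1) * (n + k + 1)) := by
  rcases le_or_gt k n with h | h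
  · have h₁ : (n.choose k : ℝ) ≠ 0 := by exact_mod_cast (Nat.choose_pos h).ne'
    have h₂ : ((n + k).choose k : ℝ) ≠ 0 := by exact_mod_cast (Nat.choose_pos (by omega)).ne'
    rw [aperyApprox_succ_left h, aperyWeight]
    field_simp
  · simp [aperyWeight, Nat.choose_eq_zero_of_lt h]

lemma aperyWeight_succ_mul_aperyApprox_succ_left {n k : ℕ} (h : k ≤ n) :
    aperyWeight (n + 1) k * aperyApprox (n + 1) k = aperyWeight (n + 1) k * aperyApprox n k
      + 2 * (-1) ^ (n + k) * (n + 1).choose k / (((n : ℝ) + 1) * (n + 1 - k)) := by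
  have h₁ : ((n + 1).choose k : ℝ) ≠ 0 := by exact_mod_cast (Nat.choose_pos (by omega)).ne'
  have h₂ : ((n + k).choose k : ℝ) ≠ 0 := by exact_mod_cast (Nat.choose_pos (by omega)).ne'
  have hnk : (n : ℝ) + 1 - k ≠ 0 := by
    have : (k : ℝ) ≤ n := by exact_mod_cast h
    linarith
  rw [aperyApprox_succ_left h, aperyWeight, show n + 1 + k = n + k + 1 by ring,
    cast_add_succ_choose, cast_choose_eq_succ_left n k]
  field_simp

lemma aperyWeight_mul_aperyApprox_succ_right {n k : ℕ} (h : k < n) :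
    aperyWeight n k * aperyApprox n (k + 1) = aperyWeight n k * aperyApprox n k
      + (-1) ^ (n + k) * n.choose k / (((n : ℝ) - k) * (n + k + 1)) := by
  have h₁ : (n.choose k : ℝ) ≠ 0 := by exact_mod_cast (Nat.choose_pos h.le).ne'
  have h₂ : ((n + k).choose k : ℝ) ≠ 0 := by exact_mod_cast (Nat.choose_pos (by omega)).ne'
  have hnk : (n : ℝ) - k ≠ 0 := sub_ne_zero.mpr (by exact_mod_cast h.ne')
  rw [aperyApprox_succ_right, aperyWeight, cast_choose_succ_succ, cast_choose_succ_right]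
  push_cast
  field_simp

/-- The telescoping certificate for the summands `aperyWeight n k * aperyApprox n k` of Apéry's
numerators. -/
noncomputable def aperyNumeratorCert (n k : ℕ) : ℝ :=
  aperyCert (n + 1) k * (aperyWeight (n + 1) k * aperyApprox (n + 1) k)
    + 3 * (-1) ^ (n + k) * k * (n + 1).choose k / (n + 1)

lemma aperyOp_aperyWeight_mul_aperyApprox_zero (n : ℕ) :
    aperyOp (fun m => aperyWeight m 0 * aperyApprox m 0) n = aperyNumeratorCert n 0 := by
  simp only [aperyOp, aperyNumeratorCert, aperyWeight, aperyCert]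
  rw [aperyApprox_succ_zero (n + 1), aperyApprox_succ_zero n]
  simp only [Nat.choose_zero_right]
  push_cast
  field_simp
  ring

/-- When `cₙ(k+1)`, `cₙ₊₂(k+1)` and `cₙ₊₁(k)` are all replaced by `cₙ₊₁(k+1)` in the telescoping
identity for `Aₙ`, the left-hand side is what the increments contribute. -/
lemma aperyNumeratorCert_correction {n k : ℕ} (h : k ≤ n) :
    ((n : ℝ) + 2) ^ 2 * (2 * (-1) ^ (n + k) * (n + 2).choose (k + 1) / ((n + 2) * (n + 1 - k)))
        - (n + 1) ^ 2 * (2 * (-1) ^ (n + k) * n.choose (k + 1) / ((n + 1) * (n + k + 2)))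
        + aperyCert (n + 1) k * ((-1) ^ (n + k) * (n + 1).choose k / ((n + 1 - k) * (n + k + 2)))
      = -(3 * (-1) ^ (n + k) * (k + 1) * (n + 1).choose (k + 1) / (n + 1))
        - 3 * (-1) ^ (n + k) * k * (n + 1).choose k / (n + 1) := by
  have hnk : (n : ℝ) + 1 - k ≠ 0 := by
    have : (k : ℝ) ≤ n := by exact_mod_cast h
    linarith
  rw [aperyCert, cast_choose_succ_succ (n + 1), cast_choose_succ_right (n + 1),
    cast_choose_succ_right n, cast_choose_eq_succ_left n]
  push_cast
  field_simp
  ring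

lemma aperyOp_aperyWeight_mul_aperyApprox_succ {n k : ℕ} (h : k ≤ n) :
    aperyOp (fun m => aperyWeight m (k + 1) * aperyApprox m (k + 1)) n
      = aperyNumeratorCert n (k + 1) - aperyNumeratorCert n k := by
  have hB := aperyOp_aperyWeight_succ n k
  have h₀ := aperyWeight_mul_aperyApprox_succ_left n (k + 1)
  have h₂ := aperyWeight_succ_mul_aperyApprox_succ_left (show k + 1 ≤ n + 1 by omega)
  have hk := aperyWeight_mul_aperyApprox_succ_right (show k < n + 1 by omega)
  have hc := aperyNumeratorCert_correction h
  simp only [aperyOp, aperyNumeratorCert] at hB ⊢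
  push_cast at h₀ h₂ hk hc ⊢
  linear_combination aperyApprox (n + 1) (k + 1) * hB + ((n : ℝ) + 1) ^ 2 * h₀
    + ((n : ℝ) + 2) ^ 2 * h₂ - aperyCert (n + 1) k * hk + hc

lemma aperyWeight_succ_self (n : ℕ) :
    aperyWeight (n + 1) (n + 1) = aperyWeight n n * (2 * (2 * (n : ℝ) + 1) / (n + 1)) := by
  rw [aperyWeight_succ_succ]
  field_simp
  ring

lemma aperyApprox_succ_self (n : ℕ) :
    aperyApprox (n + 1) (n + 1)
      = aperyApprox n n + 3 / (((n : ℝ) + 1) ^ 2 * aperyWeight (n + 1) (n + 1)) := by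
  have hself (m : ℕ) : aperyWeight m m = ((m + m).choose m : ℝ) := by simp [aperyWeight]
  have hn : aperyWeight n n ≠ 0 := by
    rw [hself]
    exact_mod_cast (Nat.choose_pos (Nat.le_add_left n n)).ne'
  have hsign : (-1 : ℝ) ^ (n + n) = 1 := (Even.add_self n).neg_one_pow
  rw [aperyApprox_succ_right, aperyApprox_succ_left le_rfl, add_right_comm n 1 n,
    pow_succ, hsign, Nat.choose_self, Nat.choose_self, ← hself n,
    show n + n + 1 + 1 = n + 1 + (n + 1) by ring, ← hself (n + 1), aperyWeight_succ_self]
  push_cast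
  field_simp
  ring

/-- The top term `k = n + 2` needs its own argument: there `cₙ₊₁(k)` is a junk value, so the
increments from it cannot be used. -/
lemma aperyOp_aperyWeight_mul_aperyApprox_last (n : ℕ) :
    aperyOp (fun m => aperyWeight m (n + 2) * aperyApprox m (n + 2)) n
      = -aperyNumeratorCert n (n + 1) := by
  have hB := aperyOp_aperyWeight_succ n (n + 1)
  have hw : aperyWeight (n + 2) (n + 2) ≠ 0 := by
    simpa [aperyWeight] using (Nat.choose_pos (Nat.le_add_left (n + 2) (n + 2))).ne'
  have hsign : (-1 : ℝ) ^ (n + (n + 1)) = -1 := by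
    rw [← add_assoc, pow_succ, (Even.add_self n).neg_one_pow, one_mul]
  have hsucc := aperyApprox_succ_self (n + 1)
  simp only [aperyOp, aperyWeight_eq_zero_of_lt (show n < n + 2 by omega),
    aperyWeight_eq_zero_of_lt (show n + 1 < n + 2 by omega)] at hB ⊢
  rw [hsucc, aperyNumeratorCert, hsign, Nat.choose_self]
  push_cast at hB ⊢
  field_simp
  linear_combination ((n : ℝ) + 2) ^ 2 * aperyApprox (n + 1) (n + 1) * hB

theorem aperyOp_aperyA2 (n : ℕ) : aperyOp aperyA2 n = 0 := by
  calc aperyOp aperyA2 n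
      = aperyOp (fun m => ∑ k ∈ range (n + 3), aperyWeight m k * aperyApprox m k) n := by
        simp only [aperyOp]
        rw [aperyA2_eq_sum_range (N := n + 3), aperyA2_eq_sum_range (N := n + 3),
          aperyA2_eq_sum_range (N := n + 3)] <;> omega
    _ = ∑ k ∈ range (n + 1 + 1), aperyOp (fun m => aperyWeight m k * aperyApprox m k) n
          + aperyOp (fun m => aperyWeight m (n + 2) * aperyApprox m (n + 2)) n := by
        rw [aperyOp_sum, sum_range_succ]
    _ = aperyNumeratorCert n (n + 1) + -aperyNumeratorCert n (n + 1) := by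
        rw [sum_range_succ_eq_of_telescoping (aperyOp_aperyWeight_mul_aperyApprox_zero n)
          fun k hk => aperyOp_aperyWeight_mul_aperyApprox_succ (Nat.le_of_lt_succ hk),
          aperyOp_aperyWeight_mul_aperyApprox_last]
    _ = 0 := add_neg_cancel _

/-- The summand `rₙ(t) = C(t,n) / ((t+n+1) C(t+n,n))²` of the remainder series of Apéry's
approximations. It vanishes for `t < n`. -/
noncomputable def aperyRemainder (n t : ℕ) : ℝ :=
  (t.choose n : ℝ) / ((t + n + 1) * (t + n).choose n) ^ 2

lemma aperyRemainder_nonneg (n t : ℕ) : 0 ≤ aperyRemainder n t := by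
  unfold aperyRemainder
  positivity

lemma aperyRemainder_zero (t : ℕ) : aperyRemainder 0 t = 1 / ((t : ℝ) + 1) ^ 2 := by
  simp [aperyRemainder]

lemma aperyRemainder_eq_zero_of_lt {n t : ℕ} (h : t < n) : aperyRemainder n t = 0 := by
  simp [aperyRemainder, Nat.choose_eq_zero_of_lt h]

lemma aperyRemainder_succ_left (n t : ℕ) :
    aperyRemainder (n + 1) t
      = aperyRemainder n t * (((n : ℝ) + 1) * (t - n) / (t + n + 2) ^ 2) := by
  unfold aperyRemainder
  rw [← add_assoc, cast_choose_succ_succ, cast_choose_succ_right]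
  push_cast
  field_simp
  ring

lemma aperyRemainder_succ_succ (n t : ℕ) :
    aperyRemainder (n + 1) (t + 1)
      = aperyRemainder n t
        * (((n : ℝ) + 1) * (t + 1) ^ 3 / ((t + n + 2) * (t + n + 3)) ^ 2) := by
  unfold aperyRemainder
  rw [show t + 1 + (n + 1) = t + n + 1 + 1 by ring, cast_choose_succ_succ (t + n + 1),
    cast_choose_succ_succ t, cast_add_succ_choose]
  push_cast
  field_simp
  ring

/-- The telescoping certificate for the remainder series. -/
noncomputable def aperyRemainderCert (n t : ℕ) : ℝ :=
  aperyCert n (-(t + 1)) * aperyRemainder n t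

lemma aperyOp_neg_one_pow_mul_aperyRemainder (n t : ℕ) :
    aperyOp (fun m => (-1) ^ m * aperyRemainder m t) n
      = (-1) ^ n * aperyRemainderCert (n + 1) (t + 1)
        - (-1) ^ n * aperyRemainderCert (n + 1) t := by
  simp only [aperyOp, aperyRemainderCert, aperyCert]
  rw [aperyRemainder_succ_left (n + 1), aperyRemainder_succ_left n, aperyRemainder_succ_succ]
  push_cast
  field_simp
  ring

lemma aperyRemainder_le (n t : ℕ) :
    aperyRemainder n t ≤ 1 / (((t : ℝ) + n + 1) ^ 2 * (t + n).choose n) := by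
  have hpos : 0 < ((t + n).choose n : ℝ) := by
    exact_mod_cast Nat.choose_pos (Nat.le_add_left n t)
  have hle : (t.choose n : ℝ) ≤ (t + n).choose n := by
    exact_mod_cast Nat.choose_le_choose n (Nat.le_add_right t n)
  calc aperyRemainder n t
      ≤ (t + n).choose n / (((t : ℝ) + n + 1) * (t + n).choose n) ^ 2 := by
        unfold aperyRemainder
        gcongr
    _ = 1 / (((t : ℝ) + n + 1) ^ 2 * (t + n).choose n) := by field_simp

lemma summable_aperyRemainder (n : ℕ) : Summable (aperyRemainder n) := by
  have hzeta : Summable fun t : ℕ => 1 / ((t : ℝ) + 1) ^ 2 := by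
    exact_mod_cast (summable_nat_add_iff 1).mpr hasSum_zeta_two.summable
  refine hzeta.of_nonneg_of_le (aperyRemainder_nonneg n) fun t => (aperyRemainder_le n t).trans ?_
  have hone : (1 : ℝ) ≤ (t + n).choose n := by
    exact_mod_cast Nat.choose_pos (Nat.le_add_left n t)
  gcongr
  calc ((t : ℝ) + 1) ^ 2 ≤ ((t : ℝ) + n + 1) ^ 2 := by
        gcongr
        linarith [n.cast_nonneg (α := ℝ)]
    _ ≤ ((t : ℝ) + n + 1) ^ 2 * (t + n).choose n := le_mul_of_one_le_right (by positivity) hone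

lemma abs_aperyCert_neg_le {N x s : ℝ} (hN : 0 ≤ N) (hx : 0 ≤ x) (hNs : N ≤ s) (hxs : x ≤ s)
    (hs : 1 ≤ s) : |aperyCert N (-x)| ≤ 31 * s ^ 2 := by
  unfold aperyCert
  rw [abs_le]
  constructor <;> nlinarith [mul_le_mul hNs hxs hx (by linarith), mul_nonneg hN hx]

lemma tendsto_aperyRemainderCert_succ (n : ℕ) :
    Tendsto (aperyRemainderCert (n + 1)) atTop (𝓝 0) := by
  have hlim : Tendsto (fun t : ℕ => 31 * (1 / ((t : ℝ) + 1))) atTop (𝓝 0) := by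
    simpa using (tendsto_one_div_add_atTop_nhds_zero_nat (𝕜 := ℝ)).const_mul 31
  refine squeeze_zero_norm (fun t => ?_) hlim
  have hchoose : (t : ℝ) + 1 ≤ (t + (n + 1)).choose (n + 1) := by
    rw [← Nat.choose_symm_add]
    exact_mod_cast (Nat.choose_succ_self_right t).ge.trans
      (Nat.choose_le_choose t (by omega : t + 1 ≤ t + (n + 1)))
  have hcert : |aperyCert (n + 1 : ℕ) (-(t + 1))| ≤ 31 * ((t : ℝ) + (n + 1 : ℕ) + 1) ^ 2 := by
    push_cast
    apply abs_aperyCert_neg_le <;> linarith [n.cast_nonneg (α := ℝ), t.cast_nonneg (α := ℝ)]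
  rw [aperyRemainderCert, norm_mul, Real.norm_eq_abs,
    Real.norm_of_nonneg (aperyRemainder_nonneg _ _)]
  calc |aperyCert (n + 1 : ℕ) (-(t + 1))| * aperyRemainder (n + 1) t
      ≤ 31 * ((t : ℝ) + (n + 1 : ℕ) + 1) ^ 2
          * (1 / (((t : ℝ) + (n + 1 : ℕ) + 1) ^ 2 * (t + 1))) := by
        gcongr
        · exact aperyRemainder_nonneg _ _
        · exact (aperyRemainder_le (n + 1) t).trans (by gcongr)
    _ = 31 * (1 / ((t : ℝ) + 1)) := by field_simp

theorem aperyOp_tsum_aperyRemainder (n : ℕ) :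
    aperyOp (fun m => (-1) ^ m * ∑' t, aperyRemainder m t) n = 0 := by
  have hsum := hasSum_aperyOp (fun m => (summable_aperyRemainder m).hasSum.mul_left ((-1) ^ m)) n
  simp only [aperyOp_neg_one_pow_mul_aperyRemainder] at hsum
  have hlim := (tendsto_aperyRemainderCert_succ n).const_mul ((-1) ^ n)
  rw [eq_sub_of_hasSum_telescoping hlim hsum, aperyRemainderCert,
    aperyRemainder_eq_zero_of_lt n.succ_pos]
  simp only [mul_zero, sub_zero]

lemma hasSum_aperyRemainder_zero : HasSum (aperyRemainder 0) (π ^ 2 / 6) := by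
  have h := (hasSum_nat_add_iff' 1).mpr hasSum_zeta_two
  rw [funext aperyRemainder_zero]
  simpa using h

lemma aperyRemainder_one_add_three_mul (t : ℕ) :
    aperyRemainder 1 t + 3 * aperyRemainder 0 t
      = aperyRemainderCert 0 (t + 1) - aperyRemainderCert 0 t := by
  simp only [aperyRemainderCert, aperyCert]
  rw [aperyRemainder_succ_left 0, aperyRemainder_zero, aperyRemainder_zero]
  push_cast
  field_simp
  ring

lemma tendsto_aperyRemainderCert_zero : Tendsto (aperyRemainderCert 0) atTop (𝓝 1) := by
  have h := tendsto_one_div_add_atTop_nhds_zero_nat (𝕜 := ℝ)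
  have hlim : Tendsto (fun t : ℕ => 1 - 3 * (1 / ((t : ℝ) + 1)) - 2 * (1 / ((t : ℝ) + 1)) ^ 2)
      atTop (𝓝 1) := by
    simpa using ((h.const_mul 3).const_sub 1).sub ((h.pow 2).const_mul 2)
  refine hlim.congr fun t => ?_
  rw [aperyRemainderCert, aperyRemainder_zero, aperyCert]
  push_cast
  field_simp
  ring

lemma tsum_aperyRemainder_one : ∑' t, aperyRemainder 1 t = 5 - 3 * (π ^ 2 / 6) := by
  have hsum := (summable_aperyRemainder 1).hasSum.add (hasSum_aperyRemainder_zero.mul_left 3)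
  simp only [aperyRemainder_one_add_three_mul] at hsum
  have h := eq_sub_of_hasSum_telescoping tendsto_aperyRemainderCert_zero hsum
  norm_num [aperyRemainderCert, aperyCert, aperyRemainder_zero] at h
  linarith

theorem aperyB2_mul_zeta_two_sub_aperyA2 (n : ℕ) :
    aperyB2 n * (π ^ 2 / 6) - aperyA2 n = (-1) ^ n * ∑' t, aperyRemainder n t := by
  refine eq_of_aperyOp_eq (u := fun m => aperyB2 m * (π ^ 2 / 6) - aperyA2 m)
    (v := fun m => (-1) ^ m * ∑' t, aperyRemainder m t) (fun m => ?_) ?_ ?_ n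
  · rw [aperyOp_sub, aperyOp_mul_const, aperyOp_aperyB2, aperyOp_aperyA2,
      aperyOp_tsum_aperyRemainder, zero_mul, sub_zero]
  · simp [aperyB2, aperyA2, hasSum_aperyRemainder_zero.tsum_eq]
  · norm_num [aperyB2, aperyA2, sum_range_succ, tsum_aperyRemainder_one]

lemma aperyRemainder_add_left (n k : ℕ) :
    aperyRemainder n (n + k)
      = ((n + k).choose n : ℝ) / ((2 * (n : ℝ) + k + 1) ^ 2 * ((2 * n + k).choose n : ℝ) ^ 2) := by
  rw [aperyRemainder, show n + k + n = 2 * n + k by ring, mul_pow]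
  push_cast
  ring_nf

lemma tsum_aperyRemainder_add_left (n : ℕ) :
    ∑' k, aperyRemainder n (n + k) = ∑' t, aperyRemainder n t := by
  refine (add_right_injective n).tsum_eq fun t ht => ⟨t - n, Nat.add_sub_cancel' ?_⟩
  exact le_of_not_gt fun h => ht (aperyRemainder_eq_zero_of_lt h)

/-- **The absolute error sum of Apéry's continued fraction for `ζ(2)` as a double series.**
`∑ₙ |Bₙ ζ(2) − Aₙ| = ∑ₙ ∑ₖ C(n+k,n)/((2n+k+1)² C(2n+k,n)²)`, where `ζ(2) = π²/6`. -/
theorem error_sum_abs_apery_zeta_two :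
    ∑' n : ℕ, |aperyB2 n * (π ^ 2 / 6) - aperyA2 n|
      = ∑' n : ℕ, ∑' k : ℕ,
          (Nat.choose (n + k) n : ℝ) /
            ((2 * (n : ℝ) + k + 1) ^ 2 * (Nat.choose (2 * n + k) n : ℝ) ^ 2) := by
  refine tsum_congr fun n => ?_
  simp only [← aperyRemainder_add_left]
  rw [tsum_aperyRemainder_add_left, aperyB2_mul_zeta_two_sub_aperyA2, abs_mul, abs_neg_one_pow,
    one_mul, abs_of_nonneg (tsum_nonneg (aperyRemainder_nonneg n))]
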